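/- Let ν > 0, L > 0, ξ > 0, λ ∈ ℝ and let q : [0,L] → ℝ be continuous. Let u ∈ C²((0,L)) ∩ C⁰([0,L]) with u(0) = u(L) = 0 satisfy −u''(x) + ξ² q(x)² u(x) + ((ν² − 1/4)/x²) u(x) = λ u(x) for every x ∈ (0,L). Let ψ ∈ C²([0,L]) and set θ := u e^{ξψ}. Assume that θ' and x ↦ θ(x)/x are square-integrable on (0,L), and that θ(x)θ'(x) → 0 as x → 0⁺ and as x → L⁻. Then ∫₀^L ( θ'(x)² + ( ξ² q(x)² + (ν² − 1/4)/x² − ξ² ψ'(x)² − λ ) θ(x)² ) dx = 0. -/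

import Mathlib

/-!
With `p = u' e^{ξψ}`, the product rule reads `θ' = p + ξψ'θ`, and the eigenvalue equation
`u'' = (V - λ)u` turns into `p' = (V - λ)θ + ξψ'p`. Completing the square,
`(θp)' = p² + 2ξψ'θp + (V - λ)θ² = θ'² + (V - ξ²ψ'² - λ)θ²`,
so the integral is the difference of the boundary values of `θp = θθ' - ξψ'θ²`, and both of these
vanish because `θθ'` and `θ` do and `ψ'` stays bounded.
-/

open MeasureTheory Real Set Filter

/-- The Agmon-conjugated function `θ = u e^{ξψ}`. -/
noncomputable def agmonTheta (ξ : ℝ) (u ψ : ℝ → ℝ) : ℝ → ℝ :=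
  fun x => u x * Real.exp (ξ * ψ x)

section Pointwise

variable {ξ x : ℝ} {u ψ : ℝ → ℝ}

lemma hasDerivAt_agmonTheta {u' ψ' : ℝ} (hu : HasDerivAt u u' x) (hψ : HasDerivAt ψ ψ' x) :
    HasDerivAt (agmonTheta ξ u ψ) (u' * exp (ξ * ψ x) + ξ * ψ' * agmonTheta ξ u ψ x) x := by
  refine (hu.mul (hψ.const_mul ξ).exp).congr_deriv ?_
  simp only [agmonTheta]
  ring

lemma deriv_agmonTheta (hu : DifferentiableAt ℝ u x) (hψ : DifferentiableAt ℝ ψ x) :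
    deriv (agmonTheta ξ u ψ) x =
      agmonTheta ξ (deriv u) ψ x + ξ * deriv ψ x * agmonTheta ξ u ψ x :=
  (hasDerivAt_agmonTheta hu.hasDerivAt hψ.hasDerivAt).deriv

lemma hasDerivAt_agmonTheta_mul_agmonTheta_deriv {W : ℝ} (hu : DifferentiableAt ℝ u x)
    (hu' : HasDerivAt (deriv u) (W * u x) x) (hψ : DifferentiableAt ℝ ψ x) :
    HasDerivAt (fun y ↦ agmonTheta ξ u ψ y * agmonTheta ξ (deriv u) ψ y)
      (deriv (agmonTheta ξ u ψ) x ^ 2 + (W - ξ ^ 2 * deriv ψ x ^ 2) * agmonTheta ξ u ψ x ^ 2)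
      x := by
  have hθ := hasDerivAt_agmonTheta (ξ := ξ) hu.hasDerivAt hψ.hasDerivAt
  have hp := hasDerivAt_agmonTheta (ξ := ξ) hu' hψ.hasDerivAt
  refine (hθ.mul hp).congr_deriv ?_
  rw [deriv_agmonTheta hu hψ]
  simp only [agmonTheta]
  ring

end Pointwise

section Interval

variable {a b : ℝ} {f ψ : ℝ → ℝ}

lemma continuousOn_agmonTheta {s : Set ℝ} {ξ : ℝ} {u : ℝ → ℝ} (hu : ContinuousOn u s)
    (hψ : ContinuousOn ψ s) : ContinuousOn (agmonTheta ξ u ψ) s :=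
  hu.mul (hψ.const_mul ξ).rexp

lemma eqOn_derivWithin_Icc_deriv : EqOn (derivWithin ψ (Icc a b)) (deriv ψ) (Ioo a b) :=
  fun _ hx ↦ derivWithin_of_mem_nhds (Icc_mem_nhds hx.1 hx.2)

lemma tendsto_deriv_mul_nhdsWithin_Ioo {c : ℝ} (hab : a < b) (hψ : ContDiffOn ℝ 1 ψ (Icc a b))
    (hf : ContinuousOn f (Icc a b)) (hc : c ∈ Icc a b) (hfc : f c = 0) :
    Tendsto (fun x ↦ deriv ψ x * f x) (nhdsWithin c (Ioo a b)) (nhds 0) := by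
  have hψ' := hψ.continuousOn_derivWithin (uniqueDiffOn_Icc hab) le_rfl
  have hlim : Tendsto (fun x ↦ derivWithin ψ (Icc a b) x * f x) (nhdsWithin c (Ioo a b))
      (nhds 0) := by
    simpa only [Pi.mul_def, hfc, mul_zero] using
      ((hψ'.mul hf) c hc).tendsto.mono_left (nhdsWithin_mono c Ioo_subset_Icc_self)
  refine hlim.congr' ?_
  filter_upwards [self_mem_nhdsWithin] with x hx
  rw [eqOn_derivWithin_Icc_deriv hx]

lemma integrableOn_deriv_sq_mul (hab : a < b) (hψ : ContDiffOn ℝ 1 ψ (Icc a b))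
    (hf : ContinuousOn f (Icc a b)) :
    IntegrableOn (fun x ↦ deriv ψ x ^ 2 * f x) (Ioo a b) := by
  have hψ' := hψ.continuousOn_derivWithin (uniqueDiffOn_Icc hab) le_rfl
  refine (((hψ'.pow 2).mul hf).integrableOn_Icc.mono_set Ioo_subset_Icc_self).congr_fun
    (fun x hx ↦ ?_) measurableSet_Ioo
  simp only [Pi.mul_apply, Pi.pow_apply, eqOn_derivWithin_Icc_deriv hx]

lemma integrableOn_add_div_sq_mul_sq {g : ℝ → ℝ} (c : ℝ) (hg : ContinuousOn g (Icc a b))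
    (hf : ContinuousOn f (Icc a b)) (hfx : IntegrableOn (fun x ↦ (f x / x) ^ 2) (Ioo a b)) :
    IntegrableOn (fun x ↦ (g x + c / x ^ 2) * f x ^ 2) (Ioo a b) := by
  have hregular : IntegrableOn (fun x ↦ g x * f x ^ 2) (Ioo a b) :=
    (hg.mul (hf.pow 2)).integrableOn_Icc.mono_set Ioo_subset_Icc_self
  refine (hregular.add (hfx.const_mul c)).congr_fun (fun x _ ↦ ?_) measurableSet_Ioo
  simp only [Pi.add_apply]
  ring

end Interval

section EnergyIdentity

variable {a b ξ : ℝ} {u ψ : ℝ → ℝ}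

lemma tendsto_agmonTheta_mul_agmonTheta_deriv {c : ℝ} (hab : a < b)
    (hu_cont : ContinuousOn u (Icc a b)) (hu : DifferentiableOn ℝ u (Ioo a b))
    (hψ : ContDiffOn ℝ 1 ψ (Icc a b)) (hc : c ∈ Icc a b) (huc : u c = 0)
    (hlim : Tendsto (fun x ↦ agmonTheta ξ u ψ x * deriv (agmonTheta ξ u ψ) x)
      (nhdsWithin c (Ioo a b)) (nhds 0)) :
    Tendsto (fun x ↦ agmonTheta ξ u ψ x * agmonTheta ξ (deriv u) ψ x)
      (nhdsWithin c (Ioo a b)) (nhds 0) := by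
  have hθ := (continuousOn_agmonTheta (ξ := ξ) hu_cont hψ.continuousOn).pow 2
  have hweight := (tendsto_deriv_mul_nhdsWithin_Ioo hab hψ hθ hc
    (by simp [agmonTheta, huc])).const_mul ξ
  have hdiff := hlim.sub hweight
  rw [mul_zero, sub_zero] at hdiff
  refine hdiff.congr' ?_
  filter_upwards [self_mem_nhdsWithin] with x hx
  rw [deriv_agmonTheta (hu.differentiableAt (isOpen_Ioo.mem_nhds hx))
    ((hψ.differentiableOn one_ne_zero).differentiableAt (Icc_mem_nhds hx.1 hx.2))]
  simp only [Pi.pow_apply]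
  ring

lemma integrableOn_agmon_energy_density {V : ℝ → ℝ} (lam : ℝ) (hab : a < b)
    (hu_cont : ContinuousOn u (Icc a b)) (hψ : ContDiffOn ℝ 1 ψ (Icc a b))
    (hθ' : IntegrableOn (fun x ↦ deriv (agmonTheta ξ u ψ) x ^ 2) (Ioo a b))
    (hV : IntegrableOn (fun x ↦ V x * agmonTheta ξ u ψ x ^ 2) (Ioo a b)) :
    IntegrableOn (fun x ↦ deriv (agmonTheta ξ u ψ) x ^ 2
      + (V x - ξ ^ 2 * deriv ψ x ^ 2 - lam) * agmonTheta ξ u ψ x ^ 2) (Ioo a b) := by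
  have hθ := (continuousOn_agmonTheta (ξ := ξ) hu_cont hψ.continuousOn).pow 2
  have hweight := (integrableOn_deriv_sq_mul hab hψ hθ).const_mul (ξ ^ 2)
  have hθsq : IntegrableOn (fun x ↦ lam * agmonTheta ξ u ψ x ^ 2) (Ioo a b) :=
    (hθ.const_mul lam).integrableOn_Icc.mono_set Ioo_subset_Icc_self
  refine (hθ'.add ((hV.sub hweight).sub hθsq)).congr_fun (fun x _ ↦ ?_) measurableSet_Ioo
  simp only [Pi.add_apply, Pi.sub_apply, Pi.pow_apply]
  ring

theorem agmon_energy_identity_general {V : ℝ → ℝ} {lam : ℝ} (hab : a < b)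
    (hu_cont : ContinuousOn u (Icc a b)) (hu : DifferentiableOn ℝ u (Ioo a b))
    (hu' : DifferentiableOn ℝ (deriv u) (Ioo a b)) (hua : u a = 0) (hub : u b = 0)
    (heq : ∀ x ∈ Ioo a b, -deriv (deriv u) x + V x * u x = lam * u x)
    (hψ : ContDiffOn ℝ 1 ψ (Icc a b))
    (hθ' : IntegrableOn (fun x ↦ deriv (agmonTheta ξ u ψ) x ^ 2) (Ioo a b))
    (hV : IntegrableOn (fun x ↦ V x * agmonTheta ξ u ψ x ^ 2) (Ioo a b))
    (hlima : Tendsto (fun x ↦ agmonTheta ξ u ψ x * deriv (agmonTheta ξ u ψ) x)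
      (nhdsWithin a (Ioi a)) (nhds 0))
    (hlimb : Tendsto (fun x ↦ agmonTheta ξ u ψ x * deriv (agmonTheta ξ u ψ) x)
      (nhdsWithin b (Iio b)) (nhds 0)) :
    ∫ x in a..b, (deriv (agmonTheta ξ u ψ) x ^ 2
      + (V x - ξ ^ 2 * deriv ψ x ^ 2 - lam) * agmonTheta ξ u ψ x ^ 2) = 0 := by
  have hderiv : ∀ x ∈ Ioo a b,
      HasDerivAt (fun y ↦ agmonTheta ξ u ψ y * agmonTheta ξ (deriv u) ψ y)
        (deriv (agmonTheta ξ u ψ) x ^ 2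
          + (V x - ξ ^ 2 * deriv ψ x ^ 2 - lam) * agmonTheta ξ u ψ x ^ 2) x := by
    intro x hx
    have hx_nhds := isOpen_Ioo.mem_nhds hx
    have hu'' : HasDerivAt (deriv u) ((V x - lam) * u x) x :=
      (hu'.differentiableAt hx_nhds).hasDerivAt.congr_deriv (by linarith [heq x hx])
    have hψx := (hψ.differentiableOn one_ne_zero).differentiableAt (Icc_mem_nhds hx.1 hx.2)
    rw [sub_right_comm]
    exact hasDerivAt_agmonTheta_mul_agmonTheta_deriv (hu.differentiableAt hx_nhds) hu'' hψx
  have hint := (intervalIntegrable_iff_integrableOn_Ioo_of_le hab.le).2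
    (integrableOn_agmon_energy_density lam hab hu_cont hψ hθ' hV)
  rw [← nhdsWithin_Ioo_eq_nhdsGT hab] at hlima
  rw [← nhdsWithin_Ioo_eq_nhdsLT hab] at hlimb
  have hflux_a := tendsto_agmonTheta_mul_agmonTheta_deriv hab hu_cont hu hψ
    (left_mem_Icc.2 hab.le) hua hlima
  have hflux_b := tendsto_agmonTheta_mul_agmonTheta_deriv hab hu_cont hu hψ
    (right_mem_Icc.2 hab.le) hub hlimb
  rw [nhdsWithin_Ioo_eq_nhdsGT hab] at hflux_a
  rw [nhdsWithin_Ioo_eq_nhdsLT hab] at hflux_b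
  rw [intervalIntegral.integral_eq_sub_of_hasDerivAt_of_tendsto hab hderiv hint hflux_a hflux_b,
    sub_zero]

end EnergyIdentity

/-- One-dimensional Agmon energy identity: if `u ∈ C²((0,L)) ∩ C⁰([0,L])` vanishes at `0, L`
and solves `−u'' + ξ²q²u + ((ν²−1/4)/x²)u = λu` on `(0,L)`, and `ψ ∈ C²([0,L])`, then for
`θ = u e^{ξψ}` (with the stated integrability and boundary decay of `θθ'`),
`∫₀^L (θ'² + (ξ²q² + (ν²−1/4)/x² − ξ²ψ'² − λ) θ²) dx = 0`. -/
theorem agmon_energy_identity (ν L ξ lam : ℝ) (q u ψ : ℝ → ℝ)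
    (hν : 0 < ν) (hL : 0 < L) (hξ : 0 < ξ)
    (hq : ContinuousOn q (Set.Icc 0 L))
    (hu_cont : ContinuousOn u (Set.Icc 0 L))
    (hu_C2 : ContDiffOn ℝ 2 u (Set.Ioo 0 L))
    (hu0 : u 0 = 0) (huL : u L = 0)
    (heq : ∀ x ∈ Set.Ioo (0 : ℝ) L,
      -deriv (deriv u) x + ξ ^ 2 * (q x) ^ 2 * u x + ((ν ^ 2 - 1 / 4) / x ^ 2) * u x
        = lam * u x)
    (hψ : ContDiffOn ℝ 2 ψ (Set.Icc 0 L))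
    (hθ'int : MeasureTheory.IntegrableOn
      (fun x => (deriv (agmonTheta ξ u ψ) x) ^ 2) (Set.Ioo 0 L))
    (hθxint : MeasureTheory.IntegrableOn
      (fun x => (agmonTheta ξ u ψ x / x) ^ 2) (Set.Ioo 0 L))
    (hlim0 : Filter.Tendsto (fun x => agmonTheta ξ u ψ x * deriv (agmonTheta ξ u ψ) x)
      (nhdsWithin 0 (Set.Ioi 0)) (nhds 0))
    (hlimL : Filter.Tendsto (fun x => agmonTheta ξ u ψ x * deriv (agmonTheta ξ u ψ) x)
      (nhdsWithin L (Set.Iio L)) (nhds 0)) :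
    ∫ x in (0 : ℝ)..L,
        ((deriv (agmonTheta ξ u ψ) x) ^ 2
          + (ξ ^ 2 * (q x) ^ 2 + (ν ^ 2 - 1 / 4) / x ^ 2 - ξ ^ 2 * (deriv ψ x) ^ 2 - lam) *
              (agmonTheta ξ u ψ x) ^ 2)
      = 0 := by
  exact agmon_energy_identity_general (V := fun x ↦ ξ ^ 2 * q x ^ 2 + (ν ^ 2 - 1 / 4) / x ^ 2) hL
    hu_cont (hu_C2.differentiableOn two_ne_zero)
    ((hu_C2.deriv_of_isOpen (m := 1) isOpen_Ioo one_add_one_eq_two.le).differentiableOn one_ne_zero)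
    hu0 huL (fun x hx ↦ by linarith [heq x hx]) (hψ.of_le one_le_two) hθ'int
    (integrableOn_add_div_sq_mul_sq _ ((hq.pow 2).const_mul _)
      (continuousOn_agmonTheta hu_cont hψ.continuousOn) hθxint) hlim0 hlimL
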